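/- For all integers a and b with 1 ≤ a ≤ b, the complement of the complete bipartite graph K_{a,b} (which is the disjoint union of a complete graph on a vertices and a complete graph on b vertices) satisfies α̃(complement of K_{a,b}) = min(b + 1, 2a + 1). -/

import Mathlib

def SimpleGraph.HasBipartiteHole {V : Type*} (G : SimpleGraph V) (s t : ℕ) : Prop :=
  ∃ S T : Finset V, Disjoint S T ∧ S.card = s ∧ T.card = t ∧
    ∀ a ∈ S, ∀ b ∈ T, ¬ G.Adj a b

noncomputable def SimpleGraph.biHoleNumber {V : Type*} (G : SimpleGraph V) : ℕ :=
  sInf {r : ℕ | ∃ s t : ℕ, 0 < s ∧ 0 < t ∧ r = s + t - 1 ∧ ¬ G.HasBipartiteHole s t}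

/-- The complement of `K_{a,b}` has no edges between the two parts, so any part sizes that fit
give a bipartite hole. -/
theorem hasBipartiteHole_compl_completeBipartiteGraph_of_le {a b s t : ℕ}
    (hs : s ≤ a) (ht : t ≤ b) :
    (completeBipartiteGraph (Fin a) (Fin b))ᶜ.HasBipartiteHole s t := by
  obtain ⟨S, -, hS⟩ := Finset.exists_subset_card_eq (s := (Finset.univ : Finset (Fin a)))
    (n := s) (by simpa using hs)
  obtain ⟨T, -, hT⟩ := Finset.exists_subset_card_eq (s := (Finset.univ : Finset (Fin b)))
    (n := t) (by simpa using ht)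
  refine ⟨S.map .inl, T.map .inr, ?_, by simpa using hS, by simpa using hT, ?_⟩
  · simp [Finset.disjoint_left]
  · simp [SimpleGraph.compl_adj]

theorem SimpleGraph.HasBipartiteHole.symm {V : Type*} {G : SimpleGraph V} {s t : ℕ}
    (h : G.HasBipartiteHole s t) : G.HasBipartiteHole t s := by
  obtain ⟨S, T, hd, hS, hT, h⟩ := h
  exact ⟨T, S, hd.symm, hT, hS, fun x hx y hy hxy => h y hy x hx hxy.symm⟩

/-- Distinct nonadjacent vertices of the complement of a complete bipartite graph lie in
different parts. -/
theorem isLeft_ne_of_not_compl_completeBipartiteGraph_adj {V W : Type*} {x y : V ⊕ W}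
    (hxy : x ≠ y) (h : ¬ (completeBipartiteGraph V W)ᶜ.Adj x y) : x.isLeft ≠ y.isLeft := by
  rcases x with x | x <;> rcases y with y | y <;> simp_all [SimpleGraph.compl_adj]

theorem card_le_of_forall_isLeft {a b : ℕ} {S : Finset (Fin a ⊕ Fin b)}
    (h : ∀ x ∈ S, x.isLeft = true) : S.card ≤ a := by
  have hsub : S ⊆ (Finset.univ : Finset (Fin a)).map .inl := fun x hx => by
    have := h x hx
    rcases x with x | x <;> simp_all
  simpa using Finset.card_le_card hsub

theorem card_le_of_forall_not_isLeft {a b : ℕ} {S : Finset (Fin a ⊕ Fin b)}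
    (h : ∀ x ∈ S, x.isLeft = false) : S.card ≤ b := by
  have hsub : S ⊆ (Finset.univ : Finset (Fin b)).map .inr := fun x hx => by
    have := h x hx
    rcases x with x | x <;> simp_all
  simpa using Finset.card_le_card hsub

theorem hasBipartiteHole_compl_completeBipartiteGraph_iff {a b s t : ℕ}
    (hs : 0 < s) (ht : 0 < t) :
    (completeBipartiteGraph (Fin a) (Fin b))ᶜ.HasBipartiteHole s t ↔
      (s ≤ a ∧ t ≤ b) ∨ (t ≤ a ∧ s ≤ b) := by
  constructor
  · rintro ⟨S, T, hd, rfl, rfl, h⟩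
    obtain ⟨x, hx⟩ := Finset.card_pos.mp hs
    obtain ⟨y, hy⟩ := Finset.card_pos.mp ht
    have hne : ∀ u ∈ S, ∀ v ∈ T, u.isLeft ≠ v.isLeft := fun u hu v hv =>
      isLeft_ne_of_not_compl_completeBipartiteGraph_adj
        (fun e => Finset.disjoint_left.mp hd hu (e ▸ hv)) (h u hu v hv)
    have hxy := hne x hx y hy
    cases hl : x.isLeft
    · exact .inr ⟨card_le_of_forall_isLeft fun v hv => by grind [hne x hx v hv],
        card_le_of_forall_not_isLeft fun u hu => by grind [hne u hu y hy]⟩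
    · exact .inl ⟨card_le_of_forall_isLeft fun u hu => by grind [hne u hu y hy],
        card_le_of_forall_not_isLeft fun v hv => by grind [hne x hx v hv]⟩
  · rintro (⟨h₁, h₂⟩ | ⟨h₁, h₂⟩)
    · exact hasBipartiteHole_compl_completeBipartiteGraph_of_le h₁ h₂
    · exact (hasBipartiteHole_compl_completeBipartiteGraph_of_le h₁ h₂).symm

theorem biHoleNumber_compl_completeBipartiteGraph (a b : ℕ) (ha : 1 ≤ a) (hab : a ≤ b) :
    (completeBipartiteGraph (Fin a) (Fin b))ᶜ.biHoleNumber = min (b + 1) (2 * a + 1) := by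
  refine IsLeast.csInf_eq ⟨?_, ?_⟩
  · rcases le_total b (2 * a) with h | h
    · refine ⟨1, b + 1, by omega, by omega, by omega, ?_⟩
      rw [hasBipartiteHole_compl_completeBipartiteGraph_iff (by omega) (by omega)]
      omega
    · refine ⟨a + 1, a + 1, by omega, by omega, by omega, ?_⟩
      rw [hasBipartiteHole_compl_completeBipartiteGraph_iff (by omega) (by omega)]
      omega
  · rintro r ⟨s, t, hs, ht, rfl, h⟩
    rw [hasBipartiteHole_compl_completeBipartiteGraph_iff hs ht] at h
    omega
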